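/- Let G be a connected bridgeless cubic graph in which every 2-factor consists only of 5-cycles. Then every path of length three in G is contained in a cycle of length five. -/

import Mathlib

/-! Multigraphs: vertex type `V`, edge type `E`, incidence map `ends : E → Sym2 V`. -/

namespace Mg

variable {V E : Type}

/-- No loops: no edge has equal endpoints. -/
def NoLoops (ends : E → Sym2 V) : Prop := ∀ e, ¬ (ends e).IsDiag

/-- Cubic: every vertex is incident with exactly three edges. -/
def IsCubic (ends : E → Sym2 V) : Prop := ∀ v, {e | v ∈ ends e}.ncard = 3

/-- Reachability using only edges in `F`. -/
def Reach (ends : E → Sym2 V) (F : Set E) : V → V → Prop :=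
  Relation.ReflTransGen (fun a b => ∃ e ∈ F, ends e = s(a, b))

/-- Connected. -/
def Connected (ends : E → Sym2 V) : Prop := ∀ v w, Reach ends Set.univ v w

/-- Bridgeless: the endpoints of each edge remain joined after its removal. -/
def Bridgeless (ends : E → Sym2 V) : Prop :=
  ∀ e v w, ends e = s(v, w) → Reach ends {f | f ≠ e} v w

/-- A 2-factor: every vertex is incident with exactly two edges of `F`. -/
def IsTwoFactor (ends : E → Sym2 V) (F : Set E) : Prop :=
  ∀ v, {e | e ∈ F ∧ v ∈ ends e}.ncard = 2

/-- The component of `v` in the spanning subgraph with edge set `F`. -/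
def component (ends : E → Sym2 V) (F : Set E) (v : V) : Set V := {w | Reach ends F v w}

/-- Every 2-factor consists only of 5-cycles: each component of any 2-factor
has exactly five vertices. -/
def TwoFactorsAllC5 (ends : E → Sym2 V) : Prop :=
  ∀ F : Set E, IsTwoFactor ends F → ∀ v, (component ends F v).ncard = 5

/-- A perfect matching: every vertex is incident with exactly one edge of `M`. -/
def IsPerfectMatching (ends : E → Sym2 V) (M : Set E) : Prop :=
  ∀ v, ∃! e, e ∈ M ∧ v ∈ ends e

/-- A cycle of length `n`: `n` distinct vertices and `n` distinct edges, cyclically. -/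
def HasCycle (ends : E → Sym2 V) (n : ℕ) : Prop :=
  ∃ (c : ZMod n → V) (f : ZMod n → E), Function.Injective c ∧ Function.Injective f ∧
    ∀ i, ends (f i) = s(c i, c (i + 1))

end Mg
section Helpers

set_option linter.unusedSectionVars false

open Classical Finset

namespace Mg

lemma tutteSet {W : Type} [Fintype W] (H : SimpleGraph W) (heven : Even (Fintype.card W)) :
    (∃ p : W → W, (∀ a, H.Adj a (p a)) ∧ ∀ a, p (p a) = a) ∨
    ∃ (S : Finset W) (P : Finset (Finset W)), S.card + 2 ≤ P.card ∧
      (∀ C ∈ P, Odd C.card) ∧ (∀ C ∈ P, ∀ D ∈ P, ∀ a ∈ C, a ∈ D → C = D) ∧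
      (∀ C ∈ P, ∀ a ∈ C, a ∉ S) ∧
      (∀ C ∈ P, ∀ a ∈ C, ∀ b, H.Adj a b → b ∈ S ∨ b ∈ C) := by
  by_cases h : ∃ M : SimpleGraph.Subgraph H, M.IsPerfectMatching
  · left
    obtain ⟨M, hM⟩ := h
    rw [SimpleGraph.Subgraph.isPerfectMatching_iff] at hM
    choose p hp hp' using hM
    refine ⟨p, fun a => (hp a).adj_sub, fun a => ?_⟩
    exact (hp' (p a) a (hp a).symm).symm
  · right
    rw [SimpleGraph.tutte] at h
    push Not at h
    obtain ⟨u, hu⟩ := h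
    unfold SimpleGraph.IsTutteViolator at hu
    set K := ((⊤ : H.Subgraph).deleteVerts u).coe with hK
    have hpar := SimpleGraph.odd_ncard_oddComponents K
    have hcard : Nat.card ((⊤ : H.Subgraph).deleteVerts u).verts + u.ncard = Fintype.card W := by
      rw [SimpleGraph.Subgraph.deleteVerts_verts, SimpleGraph.Subgraph.verts_top,
        Nat.card_coe_set_eq, ← Nat.card_eq_fintype_card, ← Set.ncard_univ,
        Set.ncard_sdiff_add_ncard_of_subset (Set.subset_univ u)]
    have h2 : u.ncard + 2 ≤ K.oddComponents.ncard := by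
      rw [← hcard, Nat.even_iff] at heven
      simp only [Nat.odd_iff] at hpar
      omega
    let f : K.ConnectedComponent → Finset W := fun c =>
      univ.filter (fun w => ∃ h, (⟨w, h⟩ : ((⊤ : H.Subgraph).deleteVerts u).verts) ∈ c.supp)
    have hfc : ∀ c, (f c).card = c.supp.ncard := by
      intro c
      rw [← Set.ncard_image_of_injective c.supp Subtype.val_injective, ← Set.ncard_coe_finset]
      congr 1
      ext w
      simp [f]
    have hmem : ∀ c w, w ∈ f c ↔
        ∃ h, (⟨w, h⟩ : ((⊤ : H.Subgraph).deleteVerts u).verts) ∈ c.supp := by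
      intro c w; simp only [f, mem_filter, mem_univ, true_and]
    have hdis : ∀ c d w, w ∈ f c → w ∈ f d → c = d := by
      intro c d w h1 h2
      rw [hmem] at h1 h2
      obtain ⟨h, h1⟩ := h1
      obtain ⟨h', h2⟩ := h2
      exact SimpleGraph.ConnectedComponent.eq_of_common_vertex h1 h2
    refine ⟨u.toFinset, (K.oddComponents.toFinset).image f, ?_, ?_, ?_, ?_, ?_⟩
    · rw [Finset.card_image_of_injective, ← Set.ncard_eq_toFinset_card',
        ← Set.ncard_eq_toFinset_card']
      · exact h2
      · intro c d hcd
        obtain ⟨w, hw⟩ := c.nonempty_supp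
        have : (w : W) ∈ f c := by rw [hmem]; exact ⟨w.2, hw⟩
        exact hdis c d w this (hcd ▸ this)
    · simp only [mem_image, Set.mem_toFinset]
      rintro C ⟨c, hc, rfl⟩
      rw [hfc]; exact hc
    · simp only [mem_image, Set.mem_toFinset]
      rintro C ⟨c, hc, rfl⟩ D ⟨d, hd, rfl⟩ a h1 h2
      rw [hdis c d a h1 h2]
    · simp only [mem_image, Set.mem_toFinset]
      rintro C ⟨c, hc, rfl⟩ a h1
      rw [hmem] at h1
      obtain ⟨h, -⟩ := h1
      exact h.2
    · simp only [mem_image, Set.mem_toFinset]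
      rintro C ⟨c, hc, rfl⟩ a h1 b hab
      rw [hmem] at h1
      obtain ⟨h, h1⟩ := h1
      by_cases hb : b ∈ u
      · exact Or.inl hb
      · right
        rw [hmem]
        have hb' : b ∈ ((⊤ : H.Subgraph).deleteVerts u).verts := ⟨trivial, hb⟩
        refine ⟨hb', c.mem_supp_of_adj_mem_supp h1 ?_⟩
        rw [hK]
        simp only [SimpleGraph.Subgraph.coe_adj, SimpleGraph.Subgraph.deleteVerts_adj]
        exact ⟨trivial, h.2, trivial, hb, hab⟩

variable {V E : Type} [Fintype V] [Fintype E]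

lemma tutteEnds (ends : E → Sym2 V) (R : Finset V) (heven : Even (Rᶜ).card) :
    (∃ M : Finset E, (∀ e ∈ M, ∀ y ∈ ends e, y ∉ R) ∧
      ∀ v, v ∉ R → ∃! e, e ∈ M ∧ v ∈ ends e) ∨
    ∃ (S : Finset V) (P : Finset (Finset V)), Disjoint S R ∧ S.card + 2 ≤ P.card ∧
      (∀ C ∈ P, Odd C.card) ∧ (∀ C ∈ P, ∀ D ∈ P, ∀ a ∈ C, a ∈ D → C = D) ∧
      (∀ C ∈ P, ∀ a ∈ C, a ∉ S ∧ a ∉ R) ∧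
      (∀ C ∈ P, ∀ a ∈ C, ∀ b e, ends e = s(a, b) → b ∈ R ∨ b ∈ S ∨ b ∈ C) := by
  let H : SimpleGraph {v // v ∉ R} :=
    { Adj := fun a b => a ≠ b ∧ ∃ e, ends e = s(a.1, b.1)
      symm := ⟨by
        rintro a b ⟨h, e, he⟩
        exact ⟨h.symm, e, by rw [he, Sym2.eq_swap]⟩⟩
      loopless := ⟨by
        rintro a ⟨h, -⟩
        exact h rfl⟩ }
  have hcard : Fintype.card {v // v ∉ R} = (Rᶜ).card := by
    rw [Fintype.card_subtype]; congr 1; ext; simp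
  rcases tutteSet H (by rw [hcard]; exact heven) with ⟨p, hp, hpp⟩ | ⟨S, P, h1, h2, h3, h4, h5⟩
  · left
    have hex : ∀ z : Sym2 V, ∃ e : Option E, ∀ e', ends e' = z → ∃ e2, e = some e2 ∧ ends e2 = z := by
      intro z
      by_cases h : ∃ e', ends e' = z
      · obtain ⟨e', he'⟩ := h
        exact ⟨some e', fun _ _ => ⟨e', rfl, he'⟩⟩
      · exact ⟨none, fun e' he' => (h ⟨e', he'⟩).elim⟩
    choose g hg using hex
    refine ⟨univ.filter (fun e => ∃ a : {v // v ∉ R}, ends e = s(a.1, (p a).1) ∧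
      g (ends e) = some e), ?_, ?_⟩
    · intro e he y hy
      simp only [mem_filter, mem_univ, true_and] at he
      obtain ⟨a, ha, -⟩ := he
      rw [ha, Sym2.mem_iff] at hy
      rcases hy with rfl | rfl
      · exact a.2
      · exact (p a).2
    · intro v hv
      obtain ⟨_, e', he'⟩ := hp ⟨v, hv⟩
      obtain ⟨e, hge, hee⟩ := hg _ e' he'
      refine ⟨e, ⟨?_, ?_⟩, ?_⟩
      · simp only [mem_filter, mem_univ, true_and]
        exact ⟨⟨v, hv⟩, hee, by rw [hee]; exact hge⟩
      · rw [hee]; exact Sym2.mem_mk_left _ _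
      · rintro f ⟨hf, hvf⟩
        simp only [mem_filter, mem_univ, true_and] at hf
        obtain ⟨a, ha, hgf⟩ := hf
        have : ends f = ends e := by
          rw [hee, ha]
          rw [ha, Sym2.mem_iff] at hvf
          rcases hvf with h | h
          · have : a = ⟨v, hv⟩ := Subtype.ext h.symm
            rw [this]
          · have : p a = ⟨v, hv⟩ := Subtype.ext h.symm
            rw [← this, hpp, Sym2.eq_swap]
        rw [this, hee, hge] at hgf
        exact (Option.some.inj hgf).symm
  · right
    let em : {v // v ∉ R} ↪ V := Function.Embedding.subtype _
    refine ⟨S.map em, P.map (Finset.mapEmbedding em).toEmbedding, ?_, ?_, ?_, ?_, ?_, ?_⟩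
    · rw [Finset.disjoint_left]
      intro a ha
      simp only [mem_map] at ha
      obtain ⟨b, -, rfl⟩ := ha
      exact b.2
    · simpa using h1
    · simp only [mem_map]
      rintro _ ⟨C, hC, rfl⟩
      simpa using h2 C hC
    · simp only [mem_map]
      rintro _ ⟨C, hC, rfl⟩ _ ⟨D, hD, rfl⟩ a ha hb
      simp only [RelEmbedding.coe_toEmbedding, mapEmbedding_apply, mem_map] at ha hb
      obtain ⟨a, ha, rfl⟩ := ha
      obtain ⟨b, hb, hab⟩ := hb
      obtain rfl := em.injective hab
      rw [h3 C hC D hD b ha hb]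
    · simp only [mem_map]
      rintro _ ⟨C, hC, rfl⟩ a ha
      simp only [RelEmbedding.coe_toEmbedding, mapEmbedding_apply, mem_map] at ha
      obtain ⟨a, ha, rfl⟩ := ha
      refine ⟨?_, a.2⟩
      rintro ⟨b, hb, hab⟩
      obtain rfl := em.injective hab
      exact h4 C hC b ha hb
    · simp only [mem_map]
      rintro _ ⟨C, hC, rfl⟩ a ha b e he
      simp only [RelEmbedding.coe_toEmbedding, mapEmbedding_apply, mem_map] at ha ⊢
      obtain ⟨a, ha, rfl⟩ := ha
      by_cases hb : b ∈ R
      · exact Or.inl hb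
      · right
        by_cases hab : a = ⟨b, hb⟩
        · right; exact ⟨a, ha, by rw [hab]; rfl⟩
        · rcases h5 C hC a ha ⟨b, hb⟩ ⟨hab, e, he⟩ with h | h
          · left; exact ⟨_, h, rfl⟩
          · right; exact ⟨_, h, rfl⟩

/-- Number of endpoints of `e` in `X`. -/
noncomputable def cnt (ends : E → Sym2 V) (X : Finset V) (e : E) : ℕ :=
  (X.filter (fun v => v ∈ ends e)).card

/-- Number of edges of `F` on the boundary of `X`. -/
noncomputable def bd (ends : E → Sym2 V) (F : Finset E) (X : Finset V) : ℕ :=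
  (F.filter (fun e => cnt ends X e = 1)).card

/-- Every vertex has degree `k` in `F`. -/
def Reg (ends : E → Sym2 V) (F : Finset E) (k : ℕ) : Prop :=
  ∀ v, (F.filter (fun e => v ∈ ends e)).card = k

/-- No edge of `F` leaves `X`. -/
def Clo (ends : E → Sym2 V) (F : Finset E) (X : Finset V) : Prop :=
  ∀ e ∈ F, cnt ends X e ≠ 1

/-- The component of `v` as a finset. -/
noncomputable def comp (ends : E → Sym2 V) (F : Finset E) (v : V) : Finset V :=
  univ.filter (fun w => Reach ends (F : Set E) v w)

variable {ends : E → Sym2 V}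

lemma cnt_pair {e : E} {a b : V} (h : ends e = s(a, b)) (hab : a ≠ b) (X : Finset V) :
    cnt ends X e = (if a ∈ X then 1 else 0) + (if b ∈ X then 1 else 0) := by
  unfold cnt
  rw [h]
  have : X.filter (fun v => v ∈ s(a, b)) =
      (if a ∈ X then {a} else ∅) ∪ (if b ∈ X then {b} else ∅) := by
    ext v
    simp only [mem_filter, Sym2.mem_iff, mem_union]
    split_ifs <;> simp <;> grind
  rw [this, Finset.card_union_of_disjoint]
  · split_ifs <;> simp
  · split_ifs <;> simp [hab]

lemma ex_pair (hl : NoLoops ends) (e : E) : ∃ a b, a ≠ b ∧ ends e = s(a, b) := by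
  have := hl e
  induction h : ends e with
  | _ a b =>
    rw [h] at this
    exact ⟨a, b, by simpa using this, rfl⟩

lemma ne_of_ends (hl : NoLoops ends) {e : E} {a b : V} (h : ends e = s(a, b)) : a ≠ b := by
  have := hl e
  rw [h] at this
  simpa using this

lemma handshake {F : Finset E} {k : ℕ} (h : Reg ends F k) (X : Finset V) :
    ∑ e ∈ F, cnt ends X e = k * X.card := by
  unfold cnt
  have := Finset.sum_card_bipartiteAbove_eq_sum_card_bipartiteBelow
    (s := F) (t := X) (fun e v => v ∈ ends e)
  unfold bipartiteAbove bipartiteBelow at this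
  rw [this, Finset.sum_congr rfl (fun v _ => h v)]
  simp [mul_comm]

lemma sum_cnt (hl : NoLoops ends) (F : Finset E) (X : Finset V) :
    ∑ e ∈ F, cnt ends X e = bd ends F X + 2 * (F.filter (fun e => cnt ends X e = 2)).card := by
  unfold bd
  rw [Finset.card_filter, Finset.card_filter, Finset.mul_sum, ← Finset.sum_add_distrib]
  apply Finset.sum_congr rfl
  intro e _
  obtain ⟨a, b, hab, h⟩ := ex_pair hl e
  rw [cnt_pair h hab]
  split_ifs <;> simp_all

lemma cnt_compl (hl : NoLoops ends) (X : Finset V) (e : E) :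
    cnt ends Xᶜ e = 1 ↔ cnt ends X e = 1 := by
  obtain ⟨a, b, hab, h⟩ := ex_pair hl e
  rw [cnt_pair h hab, cnt_pair h hab]
  simp only [mem_compl]
  split_ifs <;> simp_all

lemma bd_compl (hl : NoLoops ends) (F : Finset E) (X : Finset V) :
    bd ends F Xᶜ = bd ends F X := by
  unfold bd
  simp only [cnt_compl hl]

lemma cnt_one (hl : NoLoops ends) {X : Finset V} {e : E} (h : cnt ends X e = 1) :
    ∃ a b, ends e = s(a, b) ∧ a ∈ X ∧ b ∉ X := by
  obtain ⟨a, b, hab, he⟩ := ex_pair hl e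
  rw [cnt_pair he hab] at h
  by_cases ha : a ∈ X
  · refine ⟨a, b, he, ha, ?_⟩
    intro hb
    simp [ha, hb] at h
  · refine ⟨b, a, by rw [he, Sym2.eq_swap], ?_, ha⟩
    by_contra hb
    simp [ha, hb] at h

lemma cnt_one_of (hl : NoLoops ends) {X : Finset V} {e : E} {a b : V} (he : ends e = s(a, b))
    (ha : a ∈ X) (hb : b ∉ X) : cnt ends X e = 1 := by
  rw [cnt_pair he (ne_of_ends hl he)]
  simp [ha, hb]

lemma clo_mem (hl : NoLoops ends) {F : Finset E} {X : Finset V} (h : Clo ends F X) {e : E}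
    (heF : e ∈ F) {a b : V} (he : ends e = s(a, b)) (ha : a ∈ X) : b ∈ X := by
  by_contra hb
  exact h e heF (cnt_one_of hl he ha hb)

lemma clo_reach (hl : NoLoops ends) {F : Finset E} {X : Finset V} (h : Clo ends F X) {a b : V}
    (hr : Reach ends (F : Set E) a b) (ha : a ∈ X) : b ∈ X := by
  unfold Reach at hr
  induction hr with
  | refl => exact ha
  | tail _ h2 ih =>
    obtain ⟨e, heF, he⟩ := h2
    exact clo_mem hl h heF he ih

lemma clo_univ (hl : NoLoops ends) (hconn : Connected ends) {X : Finset V}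
    (h : Clo ends univ X) (hne : X.Nonempty) : X = univ := by
  obtain ⟨a, ha⟩ := hne
  ext b
  simp only [mem_univ, iff_true]
  exact clo_reach hl h (by simpa using hconn a b) ha

lemma clo_comp (hl : NoLoops ends) (F : Finset E) (v : V) : Clo ends F (comp ends F v) := by
  intro e heF h1
  obtain ⟨a, b, he, ha, hb⟩ := cnt_one hl h1
  apply hb
  simp only [comp, mem_filter, mem_univ, true_and] at ha ⊢
  exact Relation.ReflTransGen.tail ha ⟨e, heF, he⟩

lemma mem_comp (F : Finset E) (v : V) : v ∈ comp ends F v := by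
  simp only [comp, mem_filter, mem_univ, true_and]
  exact Relation.ReflTransGen.refl

lemma comp_sub (hl : NoLoops ends) {F : Finset E} {X : Finset V} (h : Clo ends F X) {v : V}
    (hv : v ∈ X) : comp ends F v ⊆ X := by
  intro w hw
  simp only [comp, mem_filter, mem_univ, true_and] at hw
  exact clo_reach hl h hw hv

lemma clo_sdiff (hl : NoLoops ends) {F : Finset E} {X Y : Finset V} (h : Clo ends F X)
    (h' : Clo ends F Y) : Clo ends F (X \ Y) := by
  intro e heF h1
  obtain ⟨a, b, he, ha, hb⟩ := cnt_one hl h1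
  rw [mem_sdiff] at ha hb
  have := clo_mem hl h heF he ha.1
  apply hb ⟨this, fun hbY => ha.2 ?_⟩
  exact clo_mem hl h' heF (by rw [he, Sym2.eq_swap]) hbY

lemma comp_card (h5 : TwoFactorsAllC5 ends) {F : Finset E} (hF : Reg ends F 2) (v : V) :
    (comp ends F v).card = 5 := by
  rw [← h5 (F : Set E) _ v]
  · rw [← Set.ncard_coe_finset]
    congr 1
    ext w
    simp [comp, component]
  · intro v
    rw [← hF v, ← Set.ncard_coe_finset]
    congr 1
    ext w
    simp

lemma clo_dvd (hl : NoLoops ends) (h5 : TwoFactorsAllC5 ends) {F : Finset E}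
    (hF : Reg ends F 2) (X : Finset V) (h : Clo ends F X) : 5 ∣ X.card := by
  induction hn : X.card using Nat.strong_induction_on generalizing X with
  | _ n ih =>
    rcases X.eq_empty_or_nonempty with rfl | ⟨v, hv⟩
    · simp at hn; subst hn; simp
    · have hs := comp_sub hl h hv
      have h1 := Finset.card_sdiff_add_card_eq_card hs
      rw [comp_card h5 hF v] at h1
      have := ih (X \ comp ends F v).card (by omega) _ (clo_sdiff hl h (clo_comp hl F v)) rfl
      omega

lemma reg_of_cubic (hc : IsCubic ends) : Reg ends univ 3 := by
  intro v
  rw [← hc v, ← Set.ncard_coe_finset]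
  congr 1
  ext w
  simp

lemma odd_bd (hl : NoLoops ends) (hc : IsCubic ends) (X : Finset V) :
    Odd (bd ends univ X) ↔ Odd X.card := by
  have h1 := handshake (reg_of_cubic hc) X
  rw [sum_cnt hl] at h1
  simp only [Nat.odd_iff]
  omega

lemma card_even (hl : NoLoops ends) (hc : IsCubic ends) : Even (Fintype.card V) := by
  rw [← Nat.not_odd_iff_even, ← Finset.card_univ, ← odd_bd hl hc]
  have : bd ends univ univ = 0 := by
    unfold bd
    rw [Finset.card_eq_zero, Finset.filter_eq_empty_iff]
    intro e _ h
    obtain ⟨a, b, -, -, hb⟩ := cnt_one hl h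
    simp at hb
  rw [this]; simp

lemma bd_ge (hl : NoLoops ends) (hc : IsCubic ends) (hb : Bridgeless ends) (X : Finset V)
    (h : Odd X.card) : 3 ≤ bd ends univ X := by
  have h1 := (odd_bd hl hc X).2 h
  by_contra h2
  have h3 : bd ends univ X = 1 := by
    rw [Nat.odd_iff] at h1; omega
  unfold bd at h3
  rw [Finset.card_eq_one] at h3
  obtain ⟨e, he⟩ := h3
  have hm : ∀ f, cnt ends X f = 1 ↔ f = e := by
    intro f
    have := Finset.ext_iff.1 he f
    simpa using this
  obtain ⟨a, b, hab, ha, hbX⟩ := cnt_one hl ((hm e).2 rfl)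
  have hr := hb e a b hab
  apply hbX
  refine clo_reach (F := univ.filter (· ≠ e)) hl ?_ (by simpa using hr) ha
  intro f hf h1
  rw [hm] at h1
  simp [h1] at hf

lemma tight (hl : NoLoops ends) (hc : IsCubic ends) (hb : Bridgeless ends)
    (hconn : Connected ends) (R : Finset V) (hR : R.Nonempty) (heven : Even (Rᶜ).card)
    (hbd : bd ends univ R ≤ 6) :
    (∃ M : Finset E, (∀ e ∈ M, ∀ y ∈ ends e, y ∉ R) ∧
      ∀ v, v ∉ R → ∃! e, e ∈ M ∧ v ∈ ends e) ∨
    (bd ends univ R = 6 ∧ ∃ (S : Finset V) (P : Finset (Finset V)), Disjoint S R ∧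
      P.card = S.card + 2 ∧
      (∀ C ∈ P, ∀ D ∈ P, ∀ a ∈ C, a ∈ D → C = D) ∧
      (∀ C ∈ P, ∀ a ∈ C, a ∉ S ∧ a ∉ R) ∧
      (∀ C ∈ P, ∀ a ∈ C, ∀ b e, ends e = s(a, b) → b ∈ R ∨ b ∈ S ∨ b ∈ C) ∧
      (∀ C ∈ P, bd ends univ C = 3) ∧
      (∀ e a b, ends e = s(a, b) → a ∈ S → b ∉ S ∧ b ∉ R) ∧
      (∀ v, v ∈ R ∨ v ∈ S ∨ ∃ C ∈ P, v ∈ C)) := by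
  rcases tutteEnds ends R heven with h | ⟨S, P, hSR, h1, h2, h3, h4, h5⟩
  · exact Or.inl h
  right
  have hSR' := Finset.disjoint_left.1 hSR
  let α : E → ℕ := fun e => (P.filter (fun C => cnt ends C e = 1)).card
  let β : E → ℕ := fun e => if cnt ends (R ∪ S) e = 1 then 1 else 0
  let γ : E → ℕ := fun e => (if cnt ends R e = 1 then 1 else 0) + cnt ends S e
  have hαβ : ∀ e, α e ≤ β e := by
    intro e
    simp only [α, β]
    split_ifs with h
    · rw [Finset.card_le_one]
      intro C hC D hD
      rw [mem_filter] at hC hD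
      obtain ⟨a, b, he, ha, hb⟩ := cnt_one hl hC.2
      obtain ⟨a', b', he', ha', hb'⟩ := cnt_one hl hD.2
      rw [he, Sym2.eq_iff] at he'
      rcases he' with ⟨rfl, rfl⟩ | ⟨rfl, rfl⟩
      · exact h3 C hC.1 D hD.1 a ha ha'
      · exfalso
        have := h5 C hC.1 a ha b e he
        have := h4 D hD.1 b ha'
        tauto
    · rw [Nat.le_zero, Finset.card_eq_zero, Finset.filter_eq_empty_iff]
      intro C hC h'
      obtain ⟨a, b, he, ha, hb⟩ := cnt_one hl h'
      apply h
      have := h5 C hC a ha b e he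
      have := h4 C hC a ha
      apply cnt_one_of hl (a := b) (b := a) (by rw [he, Sym2.eq_swap])
      · simp; tauto
      · simp; tauto
  have hβγ : ∀ e, β e ≤ γ e := by
    intro e
    obtain ⟨a, b, hab, he⟩ := ex_pair hl e
    simp only [β, γ, cnt_pair he hab, mem_union]
    by_cases haR : a ∈ R <;> by_cases haS : a ∈ S <;> by_cases hbR : b ∈ R <;>
      by_cases hbS : b ∈ S <;> simp [*]
  have hsγ : ∑ e, γ e = bd ends univ R + 3 * S.card := by
    simp only [γ]
    rw [Finset.sum_add_distrib, handshake (reg_of_cubic hc), ← Finset.card_filter]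
    rfl
  have hsα : ∑ e, α e = ∑ C ∈ P, bd ends univ C := by
    simp only [α, bd, Finset.card_filter]
    rw [Finset.sum_comm]
  have hge : ∀ C ∈ P, 3 ≤ bd ends univ C := fun C hC => bd_ge hl hc hb C (h2 C hC)
  have hsP : ∑ C ∈ P, 3 ≤ ∑ C ∈ P, bd ends univ C := Finset.sum_le_sum hge
  have hs1 : ∑ e, α e ≤ ∑ e, β e := Finset.sum_le_sum fun e _ => hαβ e
  have hs2 : ∑ e, β e ≤ ∑ e, γ e := Finset.sum_le_sum fun e _ => hβγ e
  have hP3 : ∑ C ∈ P, 3 = 3 * P.card := by simp [mul_comm]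
  have eαβ : ∀ e, α e = β e := by
    have : ∑ e, α e = ∑ e, β e := by omega
    rw [Finset.sum_eq_sum_iff_of_le (fun e _ => hαβ e)] at this
    simpa using this
  have eβγ : ∀ e, β e = γ e := by
    have : ∑ e, β e = ∑ e, γ e := by omega
    rw [Finset.sum_eq_sum_iff_of_le (fun e _ => hβγ e)] at this
    simpa using this
  have eP : ∀ C ∈ P, bd ends univ C = 3 := by
    have : ∑ C ∈ P, 3 = ∑ C ∈ P, bd ends univ C := by omega
    rw [Finset.sum_eq_sum_iff_of_le hge] at this
    exact fun C hC => (this C hC).symm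
  refine ⟨by omega, S, P, hSR, by omega, h3, h4, h5, eP, ?_, ?_⟩
  · intro e a b he ha
    have hab := ne_of_ends hl he
    have := eβγ e
    simp only [β, γ, cnt_pair he hab, mem_union] at this
    have haR := hSR' ha
    constructor
    · intro hbS
      have hbR := hSR' hbS
      simp [*] at this
    · intro hbR
      have hbS : b ∉ S := fun h => hSR' h hbR
      simp [*] at this
  · by_contra hcon
    push Not at hcon
    obtain ⟨v, hvR, hvS, hvP⟩ := hcon
    let W : Finset V := univ.filter (fun v => v ∉ R ∧ v ∉ S ∧ ∀ C ∈ P, v ∉ C)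
    have hW : ∀ w, w ∈ W ↔ w ∉ R ∧ w ∉ S ∧ ∀ C ∈ P, w ∉ C := by simp [W]
    have hWc : Clo ends univ W := by
      intro e _ h
      obtain ⟨a, b, he, ha, hb⟩ := cnt_one hl h
      rw [hW] at ha
      have he' : ends e = s(b, a) := by rw [he, Sym2.eq_swap]
      by_cases hbC : ∃ C ∈ P, b ∈ C
      · obtain ⟨C, hC, hbC⟩ := hbC
        rcases h5 C hC b hbC a e he' with h | h | h
        · exact ha.1 h
        · exact ha.2.1 h
        · exact ha.2.2 C hC h
      · have hb2 : b ∈ R ∪ S := by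
          rw [hW] at hb
          push Not at hbC
          rw [mem_union]
          tauto
        have h1 : cnt ends (R ∪ S) e = 1 := by
          apply cnt_one_of hl he' hb2
          rw [mem_union]; tauto
        have h2 := eαβ e
        simp only [α, β, h1, if_true] at h2
        have h3 : (P.filter (fun C => cnt ends C e = 1)).Nonempty := by
          rw [← Finset.card_pos]; omega
        obtain ⟨C, hC⟩ := h3
        rw [mem_filter] at hC
        obtain ⟨a', b', he2, ha', -⟩ := cnt_one hl hC.2
        rw [he, Sym2.eq_iff] at he2
        rcases he2 with ⟨rfl, rfl⟩ | ⟨rfl, rfl⟩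
        · exact ha.2.2 C hC.1 ha'
        · exact hbC ⟨C, hC.1, ha'⟩
    have := clo_univ hl hconn hWc ⟨v, (hW v).2 ⟨hvR, hvS, hvP⟩⟩
    obtain ⟨r, hr⟩ := hR
    have h6 : r ∈ W := by rw [this]; simp
    exact ((hW r).1 h6).1 hr

/-- `M` is a perfect matching of the subgraph induced on `X`. -/
def PMon (ends : E → Sym2 V) (X : Finset V) (M : Finset E) : Prop :=
  (∀ e ∈ M, ∀ y ∈ ends e, y ∈ X) ∧ ∀ v ∈ X, ∃! e, e ∈ M ∧ v ∈ ends e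

lemma PMon.union {X Y : Finset V} {M N : Finset E} (h : PMon ends X M) (h' : PMon ends Y N)
    (hd : Disjoint X Y) : PMon ends (X ∪ Y) (M ∪ N) := by
  have hd := Finset.disjoint_left.1 hd
  refine ⟨?_, ?_⟩
  · intro e he y hy
    rw [mem_union] at he ⊢
    rcases he with he | he
    · exact Or.inl (h.1 e he y hy)
    · exact Or.inr (h'.1 e he y hy)
  · intro v hv
    rw [mem_union] at hv
    rcases hv with hv | hv
    · obtain ⟨e, he, hu⟩ := h.2 v hv
      refine ⟨e, ⟨mem_union_left _ he.1, he.2⟩, ?_⟩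
      rintro f ⟨hf, hvf⟩
      rw [mem_union] at hf
      rcases hf with hf | hf
      · exact hu f ⟨hf, hvf⟩
      · exact (hd hv (h'.1 f hf v hvf)).elim
    · obtain ⟨e, he, hu⟩ := h'.2 v hv
      refine ⟨e, ⟨mem_union_right _ he.1, he.2⟩, ?_⟩
      rintro f ⟨hf, hvf⟩
      rw [mem_union] at hf
      rcases hf with hf | hf
      · exact (hd (h.1 f hf v hvf) hv).elim
      · exact hu f ⟨hf, hvf⟩

lemma pmon_edge {e : E} {a b : V} (h : ends e = s(a, b)) : PMon ends {a, b} {e} := by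
  refine ⟨?_, ?_⟩
  · intro f hf y hy
    rw [mem_singleton] at hf
    subst hf
    rw [h, Sym2.mem_iff] at hy
    simpa using hy
  · intro v hv
    refine ⟨e, ⟨by simp, by rw [h, Sym2.mem_iff]; simpa using hv⟩, ?_⟩
    rintro f ⟨hf, -⟩
    simpa using hf

lemma pm_compl (hc : IsCubic ends) {M : Finset E} (h : PMon ends univ M) :
    Reg ends Mᶜ 2 := by
  intro v
  have h3 := reg_of_cubic hc v
  obtain ⟨e, he, hu⟩ := h.2 v (mem_univ v)
  have h1 : (M.filter (fun e => v ∈ ends e)).card = 1 := by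
    rw [Finset.card_eq_one]
    refine ⟨e, ?_⟩
    ext f
    simp only [mem_filter, mem_singleton]
    exact ⟨fun hf => hu f hf, by rintro rfl; exact he⟩
  have : (univ.filter (fun e => v ∈ ends e)) =
      (M.filter (fun e => v ∈ ends e)) ∪ (Mᶜ.filter (fun e => v ∈ ends e)) := by
    ext f
    simp only [mem_filter, mem_union, mem_compl, mem_univ, true_and]
    tauto
  rw [this, Finset.card_union_of_disjoint, h1] at h3
  · omega
  · rw [Finset.disjoint_left]
    intro f hf hf'
    simp only [mem_filter, mem_compl] at hf hf'
    exact hf'.1 hf.1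

/-- The small-boundary case of the matching lemma. -/
lemma ex_pmon (hl : NoLoops ends) (hc : IsCubic ends) (hb : Bridgeless ends)
    (hconn : Connected ends) (Y : Finset V) (hY : Y ≠ univ) (heven : Even Y.card)
    (hbd : bd ends univ Y ≤ 5) : ∃ M, PMon ends Y M := by
  have h1 : bd ends univ Yᶜ ≤ 5 := by rw [bd_compl hl]; exact hbd
  have hne : (Yᶜ).Nonempty := by
    rw [Finset.nonempty_iff_ne_empty]
    intro h
    exact hY (by simpa using h)
  rcases tight hl hc hb hconn Yᶜ hne (by simpa using heven) (by omega) with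
    ⟨M, h2, h3⟩ | ⟨h, -⟩
  · refine ⟨M, ?_, ?_⟩
    · intro e he y hy
      simpa using h2 e he y hy
    · intro v hv
      exact h3 v (by simpa using hv)
  · omega

lemma half (hl : NoLoops ends) (hc : IsCubic ends) (hb : Bridgeless ends)
    (hconn : Connected ends) (X : Finset V) (hX : bd ends univ X = 3) {a : E} {x y : V}
    (ha : ends a = s(x, y)) (hx : x ∈ X) (hy : y ∉ X) : ∃ M, PMon ends (X.erase x) M := by
  have hodd : Odd X.card := by
    rw [← odd_bd hl hc, hX]; decide
  apply ex_pmon hl hc hb hconn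
  · intro h
    have : x ∈ X.erase x := by rw [h]; simp
    simp at this
  · rw [Finset.card_erase_of_mem hx]
    exact Nat.Odd.sub_odd hodd (by decide)
  · have hsub : univ.filter (fun e => cnt ends (X.erase x) e = 1) ⊆
        ((univ.filter (fun e => cnt ends X e = 1)).erase a) ∪
        ((univ.filter (fun e => x ∈ ends e)).erase a) := by
      intro e he
      simp only [mem_filter, mem_univ, true_and] at he
      obtain ⟨p, q, hpq, hp, hq⟩ := cnt_one hl he
      rw [mem_erase] at hp
      have hea : e ≠ a := by
        rintro rfl
        rw [ha, Sym2.eq_iff] at hpq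
        rcases hpq with ⟨rfl, rfl⟩ | ⟨rfl, rfl⟩
        · exact hp.1 rfl
        · exact hy hp.2
      simp only [mem_union, mem_erase, mem_filter, mem_univ, true_and]
      by_cases hqx : q = x
      · right
        exact ⟨hea, by rw [hpq, hqx]; simp⟩
      · left
        refine ⟨hea, cnt_one_of hl hpq hp.2 ?_⟩
        intro h
        exact hq (mem_erase.2 ⟨hqx, h⟩)
    have h1 := Finset.card_le_card hsub
    have h2 := Finset.card_union_le
      ((univ.filter (fun e => cnt ends X e = 1)).erase a)
      ((univ.filter (fun e => x ∈ ends e)).erase a)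
    rw [Finset.card_erase_of_mem, Finset.card_erase_of_mem] at h2
    · have h3 := reg_of_cubic hc x
      have h4 : (univ.filter (fun e => cnt ends X e = 1)).card = 3 := hX
      unfold bd
      omega
    · simp [ha]
    · simp [cnt_one_of hl ha hx hy]

lemma cutF (hl : NoLoops ends) (hc : IsCubic ends) (hb : Bridgeless ends)
    (hconn : Connected ends) (h5 : TwoFactorsAllC5 ends) (X : Finset V)
    (hX : bd ends univ X = 3) {a b c : E} (hab : a ≠ b) (hac : a ≠ c) (hbc : b ≠ c)
    (hδ : ∀ e, cnt ends X e = 1 → e = a ∨ e = b ∨ e = c) {xa ya xb yb xc yc : V}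
    (ha : ends a = s(xa, ya)) (hbe : ends b = s(xb, yb)) (hce : ends c = s(xc, yc))
    (hxa : xa ∈ X) (hya : ya ∉ X) (hxb : xb ∈ X) (hyb : yb ∉ X) (hxc : xc ∈ X) (hyc : yc ∉ X) :
    ∃ F : Finset E, ∃ K : Finset V, (∀ e, e ≠ a → xa ∈ ends e → e ∈ F) ∧ Clo ends F K ∧
      xb ∈ K ∧ xc ∈ K ∧ 5 ∣ (X \ K).card ∧ 1 ≤ (K ∩ X).card ∧ (K ∩ X).card ≤ 4 ∧
      5 ∣ Fintype.card V ∧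
      ((K ∩ X).card = 2 → xb ≠ xc ∧ ∃ g, ends g = s(xb, xc)) := by
  obtain ⟨M1, hM1⟩ := half hl hc hb hconn X hX ha hxa hya
  obtain ⟨M2, hM2⟩ := half (x := ya) (y := xa) (a := a) hl hc hb hconn Xᶜ
    (by rw [bd_compl hl, hX]) (by rw [ha, Sym2.eq_swap]) (by simpa using hya) (by simpa using hxa)
  have hM12 := hM1.union hM2 (by
    rw [Finset.disjoint_left]
    intro v h1 h2
    simp only [mem_erase, mem_compl] at h1 h2
    exact h2.2 h1.2)
  have hM := hM12.union (pmon_edge ha) (by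
    rw [Finset.disjoint_left]
    intro v h1 h2
    simp only [mem_erase, mem_compl, mem_union, mem_insert, mem_singleton] at h1 h2
    rcases h2 with rfl | rfl
    · tauto
    · tauto)
  have huniv : (X.erase xa ∪ Xᶜ.erase ya ∪ {xa, ya}) = univ := by
    ext v
    simp only [mem_erase, mem_compl, mem_union, mem_insert, mem_singleton, mem_univ, iff_true]
    tauto
  rw [huniv] at hM
  set M := M1 ∪ M2 ∪ {a} with hMdef
  have hF := pm_compl hc hM
  have haM : a ∈ M := by simp [hMdef]
  have hMδ : ∀ e ∈ M, cnt ends X e = 1 → e = a := by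
    intro e he h1
    obtain ⟨p, q, hpq, hp, hq⟩ := cnt_one hl h1
    simp only [hMdef, mem_union, mem_singleton] at he
    rcases he with (he | he) | he
    · have := hM1.1 e he q (by rw [hpq]; simp)
      exact (hq (mem_of_mem_erase this)).elim
    · have := hM2.1 e he p (by rw [hpq]; simp)
      exact (mem_compl.1 (mem_of_mem_erase this) hp).elim
    · exact he
  have hbF : b ∈ Mᶜ := by
    rw [mem_compl]
    intro h
    exact hab (hMδ b h (cnt_one_of hl hbe hxb hyb)).symm
  have hcF : c ∈ Mᶜ := by
    rw [mem_compl]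
    intro h
    exact hac (hMδ c h (cnt_one_of hl hce hxc hyc)).symm
  set F := Mᶜ with hFdef
  have hFδ : ∀ e ∈ F, cnt ends X e = 1 → e = b ∨ e = c := by
    intro e he h1
    rcases hδ e h1 with rfl | h
    · exact (mem_compl.1 he haM).elim
    · exact h
  set K := comp ends F xb with hKdef
  have hK : Clo ends F K := clo_comp hl F xb
  have hxbK : xb ∈ K := mem_comp F xb
  have hybK : yb ∈ K := clo_mem hl hK hbF hbe hxbK
  have hKcard : K.card = 5 := comp_card h5 hF xb
  -- boundary edges of K ∩ X
  have hbdK : ∀ e ∈ F, cnt ends (K ∩ X) e = 1 → cnt ends X e = 1 ∧ ∃ p ∈ K, p ∈ X ∧ p ∈ ends e := by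
    intro e he h1
    obtain ⟨p, q, hpq, hp, hq⟩ := cnt_one hl h1
    rw [mem_inter] at hp hq
    have hqK := clo_mem hl hK he hpq hp.1
    exact ⟨cnt_one_of hl hpq hp.2 (fun h => hq ⟨hqK, h⟩), p, hp.1, hp.2, by rw [hpq]; simp⟩
  have hbB : cnt ends (K ∩ X) b = 1 :=
    cnt_one_of hl hbe (mem_inter.2 ⟨hxbK, hxb⟩) (fun h => hyb (mem_inter.1 h).2)
  have hhs := handshake hF (K ∩ X)
  rw [sum_cnt hl] at hhs
  have hxcK : xc ∈ K := by
    by_contra hcon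
    have : bd ends F (K ∩ X) = 1 := by
      unfold bd
      rw [Finset.card_eq_one]
      refine ⟨b, ?_⟩
      ext e
      simp only [mem_filter, mem_singleton]
      constructor
      · rintro ⟨he, h1⟩
        obtain ⟨h2, p, hpK, hpX, hpe⟩ := hbdK e he h1
        rcases hFδ e he h2 with h | h
        · exact h
        · exfalso
          rw [h, hce, Sym2.mem_iff] at hpe
          rcases hpe with rfl | rfl
          · exact hcon hpK
          · exact hyc hpX
      · rintro rfl
        exact ⟨hbF, hbB⟩
    omega
  have hcl : Clo ends F (X \ K) := by
    intro e he h1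
    obtain ⟨p, q, hpq, hp, hq⟩ := cnt_one hl h1
    rw [mem_sdiff] at hp hq
    have hqK : q ∉ K := fun h => hp.2 (clo_mem hl hK he (by rw [hpq, Sym2.eq_swap]) h)
    have hqX : q ∉ X := fun h => hq ⟨h, hqK⟩
    rcases hFδ e he (cnt_one_of hl hpq hp.1 hqX) with rfl | rfl
    · rw [hbe, Sym2.eq_iff] at hpq
      rcases hpq with ⟨rfl, rfl⟩ | ⟨rfl, rfl⟩
      · exact hp.2 hxbK
      · exact hqX hxb
    · rw [hce, Sym2.eq_iff] at hpq
      rcases hpq with ⟨rfl, rfl⟩ | ⟨rfl, rfl⟩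
      · exact hp.2 hxcK
      · exact hqX hxc
  refine ⟨F, K, ?_, hK, hxbK, hxcK, clo_dvd hl h5 hF _ hcl, ?_, ?_, ?_, ?_⟩
  · intro e hea hxe
    rw [hFdef, mem_compl]
    intro heM
    exact hea ((hM.2 xa (mem_univ _)).unique ⟨heM, hxe⟩ ⟨haM, by rw [ha]; simp⟩)
  · exact Finset.card_pos.2 ⟨xb, mem_inter.2 ⟨hxbK, hxb⟩⟩
  · have : K ∩ X ⊆ K.erase yb := by
      intro v hv
      rw [mem_inter] at hv
      rw [mem_erase]
      exact ⟨by rintro rfl; exact hyb hv.2, hv.1⟩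
    have := Finset.card_le_card this
    rw [Finset.card_erase_of_mem hybK] at this
    omega
  · rw [← Finset.card_univ]
    apply clo_dvd hl h5 hF
    intro e _ h
    obtain ⟨p, q, -, -, hq⟩ := cnt_one hl h
    simp at hq
  · intro h2
    have hbd2 : bd ends F (K ∩ X) ≤ 2 := by
      unfold bd
      refine le_trans (Finset.card_le_card (t := {b, c}) ?_) Finset.card_le_two
      intro e he
      rw [mem_filter] at he
      simpa using hFδ e he.1 (hbdK e he.1 he.2).1
    have hin : (F.filter (fun e => cnt ends (K ∩ X) e = 2)).Nonempty := by
      rw [← Finset.card_pos]; omega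
    obtain ⟨g, hg⟩ := hin
    rw [mem_filter] at hg
    obtain ⟨p, q, hpq, hgpq⟩ := ex_pair hl g
    have hgc := hg.2
    rw [cnt_pair hgpq hpq] at hgc
    have hp : p ∈ K ∩ X := by
      by_contra h; simp only [h, if_false] at hgc; split_ifs at hgc <;> omega
    have hq : q ∈ K ∩ X := by
      by_contra h; simp only [h, if_false] at hgc; split_ifs at hgc <;> omega
    have hKX : ({p, q} : Finset V) = K ∩ X := by
      apply Finset.eq_of_subset_of_card_le
      · intro v hv
        simp only [mem_insert, mem_singleton] at hv
        rcases hv with rfl | rfl <;> assumption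
      · rw [h2, Finset.card_pair hpq]
    have hb' : xb = p ∨ xb = q := by
      have : xb ∈ ({p, q} : Finset V) := by rw [hKX, mem_inter]; exact ⟨hxbK, hxb⟩
      simpa using this
    have hc' : xc = p ∨ xc = q := by
      have : xc ∈ ({p, q} : Finset V) := by rw [hKX, mem_inter]; exact ⟨hxcK, hxc⟩
      simpa using this
    have hgX : cnt ends X g ≠ 1 := by
      rw [cnt_pair hgpq hpq]
      simp [(mem_inter.1 hp).2, (mem_inter.1 hq).2]
    have hgb : g ≠ b := by
      rintro rfl; exact hgX (cnt_one_of hl hbe hxb hyb)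
    have hgc' : g ≠ c := by
      rintro rfl; exact hgX (cnt_one_of hl hce hxc hyc)
    have hne : xb ≠ xc := by
      intro heq
      have hsub : ({b, c, g} : Finset E) ⊆ F.filter (fun e => xb ∈ ends e) := by
        intro e he
        simp only [mem_insert, mem_singleton] at he
        rw [mem_filter]
        rcases he with rfl | rfl | rfl
        · exact ⟨hbF, by rw [hbe]; simp⟩
        · exact ⟨hcF, by rw [hce, heq]; simp⟩
        · exact ⟨hg.1, by rw [hgpq, Sym2.mem_iff]; exact hb'⟩
      have := Finset.card_le_card hsub
      rw [hF xb, Finset.card_eq_three.2 ⟨b, c, g, hbc, hgb.symm, hgc'.symm, rfl⟩] at this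
      omega
    refine ⟨hne, g, ?_⟩
    rw [hgpq]
    rcases hb' with rfl | rfl <;> rcases hc' with rfl | rfl
    · exact (hne rfl).elim
    · rfl
    · exact Sym2.eq_swap
    · exact (hne rfl).elim

lemma ex_three (hl : NoLoops ends) {X : Finset V} (hX : bd ends univ X = 3) :
    ∃ a b c : E, a ≠ b ∧ a ≠ c ∧ b ≠ c ∧
      (∀ e, cnt ends X e = 1 ↔ e = a ∨ e = b ∨ e = c) := by
  unfold bd at hX
  rw [Finset.card_eq_three] at hX
  obtain ⟨a, b, c, h1, h2, h3, h⟩ := hX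
  refine ⟨a, b, c, h1, h2, h3, fun e => ?_⟩
  have := Finset.ext_iff.1 h e
  simpa using this

lemma cut3' (hl : NoLoops ends) (hc : IsCubic ends) (hb : Bridgeless ends)
    (hconn : Connected ends) (h5 : TwoFactorsAllC5 ends) (X : Finset V)
    (hX : bd ends univ X = 3) : 5 ∣ Fintype.card V ∧ X.card % 5 ≠ 0 ∧
      (X.card % 5 ≤ 2 → X.card = 1) := by
  obtain ⟨a, b, c, hab, hac, hbc, hδ⟩ := ex_three hl hX
  obtain ⟨xa, ya, ha, hxa, hya⟩ := cnt_one hl ((hδ a).2 (by simp))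
  obtain ⟨xb, yb, hbe, hxb, hyb⟩ := cnt_one hl ((hδ b).2 (by simp))
  obtain ⟨xc, yc, hce, hxc, hyc⟩ := cnt_one hl ((hδ c).2 (by simp))
  obtain ⟨Fa, Ka, hFa, hKa, a1, a2, a3, a4, a5, a6, a7⟩ :=
    cutF hl hc hb hconn h5 X hX hab hac hbc (fun e h => (hδ e).1 h) ha hbe hce
      hxa hya hxb hyb hxc hyc
  obtain ⟨Fb, Kb, hFb, hKb, b1, b2, b3, b4, b5, b6, b7⟩ :=
    cutF hl hc hb hconn h5 X hX hab.symm hbc hac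
      (fun e h => by have := (hδ e).1 h; tauto) hbe ha hce
      hxb hyb hxa hya hxc hyc
  obtain ⟨Fc, Kc, hFc, hKc, c1, c2, c3, c4, c5, c6, c7⟩ :=
    cutF hl hc hb hconn h5 X hX hac.symm hbc.symm hab
      (fun e h => by have := (hδ e).1 h; tauto) hce ha hbe
      hxc hyc hxa hya hxb hyb
  have hca := Finset.card_sdiff_add_card_inter X Ka
  have hcb := Finset.card_sdiff_add_card_inter X Kb
  have hcc := Finset.card_sdiff_add_card_inter X Kc
  rw [Finset.inter_comm] at hca hcb hcc
  refine ⟨a6, by omega, fun hle => ?_⟩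
  by_cases h1 : X.card % 5 = 1
  · have hbc' : xb = xc := Finset.card_le_one.1 (show (Ka ∩ X).card ≤ 1 by omega) _
      (mem_inter.2 ⟨a1, hxb⟩) _ (mem_inter.2 ⟨a2, hxc⟩)
    have hac' : xa = xc := Finset.card_le_one.1 (show (Kb ∩ X).card ≤ 1 by omega) _
      (mem_inter.2 ⟨b1, hxa⟩) _ (mem_inter.2 ⟨b2, hxc⟩)
    subst hbc' hac'
    have hinc : ∀ e, xa ∈ ends e → e = a ∨ e = b ∨ e = c := by
      have : ({a, b, c} : Finset E) = univ.filter (fun e => xa ∈ ends e) := by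
        apply Finset.eq_of_subset_of_card_le
        · intro e he
          simp only [mem_insert, mem_singleton] at he
          simp only [mem_filter, mem_univ, true_and]
          rcases he with rfl | rfl | rfl
          · rw [ha]; simp
          · rw [hbe]; simp
          · rw [hce]; simp
        · rw [reg_of_cubic hc xa, Finset.card_eq_three.2 ⟨a, b, c, hab, hac, hbc, rfl⟩]
      intro e he
      have h2 : e ∈ ({a, b, c} : Finset E) := by rw [this]; simpa using he
      simpa using h2
    by_contra hne
    have hclo : Clo ends univ (X.erase xa) := by
      intro e _ h
      obtain ⟨p, q, hpq, hp, hq⟩ := cnt_one hl h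
      rw [mem_erase] at hp
      have key : e = a ∨ e = b ∨ e = c := by
        by_cases hqX : q ∈ X
        · apply hinc
          have : q = xa := by
            by_contra h; exact hq (mem_erase.2 ⟨h, hqX⟩)
          rw [hpq, this]; simp
        · exact (hδ e).1 (cnt_one_of hl hpq hp.2 hqX)
      rcases key with rfl | rfl | rfl
      · rw [ha, Sym2.eq_iff] at hpq
        rcases hpq with ⟨rfl, rfl⟩ | ⟨rfl, rfl⟩
        · exact hp.1 rfl
        · exact hya hp.2
      · rw [hbe, Sym2.eq_iff] at hpq
        rcases hpq with ⟨rfl, rfl⟩ | ⟨rfl, rfl⟩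
        · exact hp.1 rfl
        · exact hyb hp.2
      · rw [hce, Sym2.eq_iff] at hpq
        rcases hpq with ⟨rfl, rfl⟩ | ⟨rfl, rfl⟩
        · exact hp.1 rfl
        · exact hyc hp.2
    have := clo_univ hl hconn hclo (by
      rw [← Finset.card_pos, Finset.card_erase_of_mem hxa]; omega)
    have h3 : xa ∈ X.erase xa := by rw [this]; simp
    simp at h3
  · exfalso
    obtain ⟨n1, -⟩ := a7 (by omega)
    obtain ⟨n2, g, hg⟩ := b7 (by omega)
    obtain ⟨n3, -⟩ := c7 (by omega)
    have hgF : g ∈ Fa := by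
      apply hFa
      · rintro rfl
        have h1 : cnt ends X g = 1 := (hδ g).2 (by simp)
        rw [cnt_pair hg n2] at h1
        simp [hxa, hxc] at h1
      · rw [hg]; simp
    have hxaK : xa ∈ Ka := clo_mem hl hKa hgF (by rw [hg, Sym2.eq_swap]) a2
    have hsub : ({xa, xb, xc} : Finset V) ⊆ Ka ∩ X := by
      intro v hv
      simp only [mem_insert, mem_singleton] at hv
      rw [mem_inter]
      rcases hv with rfl | rfl | rfl
      · exact ⟨hxaK, hxa⟩
      · exact ⟨a1, hxb⟩
      · exact ⟨a2, hxc⟩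
    have := Finset.card_le_card hsub
    rw [Finset.card_eq_three.2 ⟨xa, xb, xc, n3, n2, n1, rfl⟩] at this
    omega

lemma cut3 (hl : NoLoops ends) (hc : IsCubic ends) (hb : Bridgeless ends)
    (hconn : Connected ends) (h5 : TwoFactorsAllC5 ends) (X : Finset V)
    (hX : bd ends univ X = 3) :
    X.card = 1 ∨ ((Xᶜ).card = 1 ∧ X.card % 5 = 4) := by
  obtain ⟨h1, h2, h3⟩ := cut3' hl hc hb hconn h5 X hX
  obtain ⟨-, h4, h6⟩ := cut3' hl hc hb hconn h5 Xᶜ (by rw [bd_compl hl, hX])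
  have := Finset.card_add_card_compl X
  omega

lemma pm_edge (hl : NoLoops ends) (hc : IsCubic ends) (hb : Bridgeless ends)
    (hconn : Connected ends) (e : E) : ∃ M, PMon ends univ M ∧ e ∈ M := by
  obtain ⟨u, v, huv, he⟩ := ex_pair hl e
  have hhs := handshake (reg_of_cubic hc) {u, v}
  rw [sum_cnt hl, Finset.card_pair huv] at hhs
  have hin : 1 ≤ (univ.filter (fun e => cnt ends {u, v} e = 2)).card := by
    apply Finset.card_pos.2
    refine ⟨e, ?_⟩
    simp [cnt_pair he huv]
  have hcard := Finset.card_add_card_compl ({u, v} : Finset V)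
  rw [Finset.card_pair huv] at hcard
  have hev := card_even hl hc
  obtain ⟨M, hM⟩ := ex_pmon hl hc hb hconn ({u, v} : Finset V)ᶜ (by
      intro h
      have : u ∈ ({u, v} : Finset V)ᶜ := by rw [h]; simp
      simp at this) (by rw [Nat.even_iff] at hev ⊢; omega)
      (by rw [bd_compl hl]; omega)
  refine ⟨M ∪ {e}, ?_, by simp⟩
  have := hM.union (pmon_edge he) (disjoint_compl_left)
  rwa [Finset.union_comm, Finset.union_compl] at this

lemma inc_two {F : Finset E} (hF : Reg ends F 2) {v : V} {f g : E} (hf : f ∈ F) (hg : g ∈ F)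
    (hfg : f ≠ g) (hvf : v ∈ ends f) (hvg : v ∈ ends g) (e : E) (he : e ∈ F) (hve : v ∈ ends e) :
    e = f ∨ e = g := by
  have : ({f, g} : Finset E) = F.filter (fun e => v ∈ ends e) := by
    apply Finset.eq_of_subset_of_card_le
    · intro x hx
      simp only [mem_insert, mem_singleton] at hx
      rw [mem_filter]
      rcases hx with rfl | rfl
      · exact ⟨hf, hvf⟩
      · exact ⟨hg, hvg⟩
    · rw [hF v, Finset.card_pair hfg]
  have h2 : e ∈ ({f, g} : Finset E) := by rw [this]; exact mem_filter.2 ⟨he, hve⟩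
  simpa using h2

lemma even_count (hl : NoLoops ends) {F : Finset E} (hF : Reg ends F 2) (A K : Finset V)
    (hT : ∀ e a b, ends e = s(a, b) → a ∉ A → b ∈ A) (hK : Clo ends F K) :
    (K ∩ A).card = (K \ A).card + (F.filter (fun e => cnt ends (K ∩ A) e = 2)).card := by
  have h1 := handshake hF (K ∩ A)
  have h2 := handshake hF (K \ A)
  have h3 : ∑ e ∈ F, cnt ends (K ∩ A) e = ∑ e ∈ F, cnt ends (K \ A) e +
      2 * (F.filter (fun e => cnt ends (K ∩ A) e = 2)).card := by
    rw [Finset.card_filter, Finset.mul_sum, ← Finset.sum_add_distrib]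
    apply Finset.sum_congr rfl
    intro e he
    obtain ⟨a, b, hab, hee⟩ := ex_pair hl e
    have t1 := hT e a b hee
    have k1 : a ∈ K ↔ b ∈ K :=
      ⟨clo_mem hl hK he hee, clo_mem hl hK he (by rw [hee, Sym2.eq_swap])⟩
    simp only [cnt_pair hee hab, mem_inter, mem_sdiff]
    by_cases ha : a ∈ A <;> by_cases hb : b ∈ A <;> by_cases hk : b ∈ K <;> simp_all
  omega

lemma path_pm (hl : NoLoops ends) (hc : IsCubic ends) (hb : Bridgeless ends)
    (hconn : Connected ends) (h5 : TwoFactorsAllC5 ends) {p v w q : V} {e₁ e₂ e₃ : E}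
    (h1 : ends e₁ = s(p, v)) (h2 : ends e₂ = s(v, w)) (h3 : ends e₃ = s(w, q))
    (hpw : p ≠ w) (hvq : v ≠ q) (hpq : p ≠ q) :
    ∃ M, PMon ends univ M ∧ e₁ ∈ M ∧ e₃ ∈ M := by
  have hpv := ne_of_ends hl h1
  have hvw := ne_of_ends hl h2
  have hwq := ne_of_ends hl h3
  have e12 : e₁ ≠ e₂ := by
    rintro rfl; rw [h1, Sym2.eq_iff] at h2; tauto
  have e13 : e₁ ≠ e₃ := by
    rintro rfl; rw [h1, Sym2.eq_iff] at h3; tauto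
  have e23 : e₂ ≠ e₃ := by
    rintro rfl; rw [h2, Sym2.eq_iff] at h3; tauto
  obtain ⟨R, hRd⟩ : ∃ R : Finset V, R = {p, v} ∪ {w, q} := ⟨_, rfl⟩
  have hRm : ∀ y, y ∈ R ↔ y = p ∨ y = v ∨ y = w ∨ y = q := by
    intro y
    simp only [hRd, mem_union, mem_insert, mem_singleton, or_assoc]
  have hdisj : Disjoint ({p, v} : Finset V) {w, q} := by
    simp [Finset.disjoint_left]; tauto
  have hRcard : R.card = 4 := by
    rw [hRd, Finset.card_union_of_disjoint hdisj, Finset.card_pair hpv, Finset.card_pair hwq]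
  have hsub : ({e₁, e₂, e₃} : Finset E) ⊆ univ.filter (fun e => cnt ends R e = 2) := by
    intro e he
    simp only [mem_insert, mem_singleton] at he
    simp only [mem_filter, mem_univ, true_and]
    rcases he with rfl | rfl | rfl
    · simp [cnt_pair h1 hpv, hRm]
    · simp [cnt_pair h2 hvw, hRm]
    · simp [cnt_pair h3 hwq, hRm]
  have hc3 := Finset.card_eq_three.2 ⟨e₁, e₂, e₃, e12, e13, e23, rfl⟩
  have hin := Finset.card_le_card hsub
  rw [hc3] at hin
  have hhs := handshake (reg_of_cubic hc) R
  rw [sum_cnt hl, hRcard] at hhs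
  have hcard := Finset.card_add_card_compl R
  have hev := card_even hl hc
  rcases tight hl hc hb hconn R ⟨p, by simp [hRm]⟩ (by rw [Nat.even_iff] at hev ⊢; omega)
    (by omega) with ⟨M, m1, m2⟩ | ⟨h6, S, P, s1, s2, s3, s4, s5, s6, s7, s8⟩
  · have hM : PMon ends Rᶜ M := by
      refine ⟨?_, ?_⟩
      · intro e he y hy
        simpa using m1 e he y hy
      · intro v hv
        exact m2 v (by simpa using hv)
    have := hM.union ((pmon_edge h1).union (pmon_edge h3) hdisj)
      (by rw [← hRd]; exact disjoint_compl_left)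
    rw [← hRd, Finset.union_comm, Finset.union_compl] at this
    exact ⟨_, this, by simp, by simp⟩
  · exfalso
    have hinEq : ({e₁, e₂, e₃} : Finset E) = univ.filter (fun e => cnt ends R e = 2) := by
      apply Finset.eq_of_subset_of_card_le hsub
      rw [hc3]; omega
    have hC1 : ∀ C ∈ P, C.card = 1 := by
      intro C hC
      rcases cut3 hl hc hb hconn h5 C (s6 C hC) with h | ⟨h, -⟩
      · exact h
      · have : R ⊆ Cᶜ := by
          intro y hy
          rw [mem_compl]
          intro hyC
          exact (s4 C hC y hyC).2 hy
        have := Finset.card_le_card this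
        omega
    obtain ⟨A, hA⟩ : ∃ A : Finset V, A = R ∪ S := ⟨_, rfl⟩
    have hAm : ∀ y, y ∈ A ↔ y ∈ R ∨ y ∈ S := by intro y; rw [hA, mem_union]
    have hTeq : Aᶜ = P.biUnion id := by
      ext y
      simp only [mem_compl, hAm, mem_biUnion, id]
      constructor
      · intro h
        have := s8 y
        tauto
      · rintro ⟨C, hC, hy⟩
        have := s4 C hC y hy
        tauto
    have hTcard : (Aᶜ).card = P.card := by
      rw [hTeq, Finset.card_biUnion]
      · simp only [id]
        rw [Finset.sum_congr rfl hC1]; simp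
      · intro C hC D hD hne
        refine Finset.disjoint_left.2 ?_
        intro y hy hy'
        exact hne (s3 C hC D hD y hy hy')
    have hAcard : A.card = S.card + 4 := by
      rw [hA, Finset.card_union_of_disjoint s1.symm, hRcard]; omega
    have hT : ∀ e a b, ends e = s(a, b) → a ∉ A → b ∈ A := by
      intro e a b he ha
      have : a ∈ P.biUnion id := by rw [← hTeq, mem_compl]; exact ha
      simp only [mem_biUnion, id] at this
      obtain ⟨C, hC, haC⟩ := this
      rw [hAm]
      rcases s5 C hC a haC b e he with h | h | h
      · exact Or.inl h
      · exact Or.inr h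
      · exact (ne_of_ends hl he (Finset.card_le_one.1 (hC1 C hC).le _ haC _ h)).elim
    have hAA : ∀ e a b, ends e = s(a, b) → a ∈ A → b ∈ A → e = e₁ ∨ e = e₂ ∨ e = e₃ := by
      intro e a b he ha hbA
      rw [hAm] at ha hbA
      have t1 := s7 e a b he
      have t2 := s7 e b a (by rw [he, Sym2.eq_swap])
      have haR : a ∈ R := by tauto
      have hbR : b ∈ R := by tauto
      have : e ∈ univ.filter (fun e => cnt ends R e = 2) := by
        simp [cnt_pair he (ne_of_ends hl he), haR, hbR]
      rw [← hinEq] at this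
      simpa using this
    obtain ⟨M, hM, heM⟩ := pm_edge hl hc hb hconn e₁
    have hF := pm_compl hc hM
    have he2 : e₂ ∈ Mᶜ := by
      rw [mem_compl]
      intro h
      exact e12 ((hM.2 v (mem_univ v)).unique ⟨heM, by rw [h1]; simp⟩ ⟨h, by rw [h2]; simp⟩)
    have hin2 : ∀ K : Finset V, ∀ e ∈ Mᶜ, cnt ends (K ∩ A) e = 2 → e = e₂ ∨ e = e₃ := by
      intro K e he h
      obtain ⟨a, b, hab, hee⟩ := ex_pair hl e
      rw [cnt_pair hee hab] at h
      have ha : a ∈ K ∩ A := by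
        by_contra hcon; simp only [hcon, if_false] at h; split_ifs at h <;> omega
      have hb : b ∈ K ∩ A := by
        by_contra hcon; simp only [hcon, if_false] at h; split_ifs at h <;> omega
      rcases hAA e a b hee (mem_inter.1 ha).2 (mem_inter.1 hb).2 with rfl | h | h
      · exact (mem_compl.1 he heM).elim
      · exact Or.inl h
      · exact Or.inr h
    have he3 : e₃ ∈ Mᶜ := by
      have hcu := even_count hl hF A univ hT (by
        intro e _ h
        obtain ⟨_, b, -, -, hb⟩ := cnt_one hl h
        simp at hb)
      rw [← Finset.compl_eq_univ_sdiff, Finset.univ_inter, hTcard] at hcu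
      by_contra hcon
      have hle : (Mᶜ.filter (fun e => cnt ends A e = 2)).card ≤ 1 := by
        rw [← Finset.card_singleton e₂]
        apply Finset.card_le_card
        intro e he
        rw [mem_filter] at he
        rw [mem_singleton]
        rcases hin2 univ e he.1 (by rw [Finset.univ_inter]; exact he.2) with h | rfl
        · exact h
        · exact (hcon he.1).elim
      omega
    have hK := clo_comp hl Mᶜ v
    have hKc := comp_card h5 hF v
    have hvK := mem_comp (ends := ends) Mᶜ v
    have hwK := clo_mem hl hK he2 h2 hvK
    have hqK := clo_mem hl hK he3 h3 hwK
    have hcu := even_count hl hF A _ hT hK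
    have heq : Mᶜ.filter (fun e => cnt ends (comp ends Mᶜ v ∩ A) e = 2) = {e₂, e₃} := by
      ext e
      simp only [mem_filter, mem_insert, mem_singleton]
      constructor
      · rintro ⟨he, h⟩
        exact hin2 _ e he h
      · rintro (rfl | rfl)
        · refine ⟨he2, ?_⟩
          simp [cnt_pair h2 hvw, hvK, hwK, hAm, hRm]
        · refine ⟨he3, ?_⟩
          simp [cnt_pair h3 hwq, hqK, hwK, hAm, hRm]
    rw [heq, Finset.card_pair e23] at hcu
    have := Finset.card_sdiff_add_card_inter (comp ends Mᶜ v) A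
    omega

lemma third (hc : IsCubic ends) (v : V) (e f : E) :
    ∃ g v', ends g = s(v, v') ∧ g ≠ e ∧ g ≠ f := by
  have h3 := reg_of_cubic hc v
  have : ((univ.filter (fun e => v ∈ ends e)) \ {e, f}).Nonempty := by
    rw [← Finset.card_pos]
    have h1 := Finset.le_card_sdiff ({e, f} : Finset E) (univ.filter (fun e => v ∈ ends e))
    have h2 : ({e, f} : Finset E).card ≤ 2 := Finset.card_le_two
    omega
  obtain ⟨g, hg⟩ := this
  simp only [mem_sdiff, mem_filter, mem_univ, true_and, mem_insert, mem_singleton, not_or] at hg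
  obtain ⟨v', hv'⟩ := Sym2.mem_iff_exists.1 hg.1
  exact ⟨g, v', hv', hg.2.1, hg.2.2⟩

lemma main_pm (hl : NoLoops ends) (hc : IsCubic ends) (hb : Bridgeless ends)
    (hconn : Connected ends) (h5 : TwoFactorsAllC5 ends) {u v w x : V} {e₁ e₂ e₃ : E}
    (h1 : ends e₁ = s(u, v)) (h2 : ends e₂ = s(v, w)) (h3 : ends e₃ = s(w, x))
    (huw : u ≠ w) (hvx : v ≠ x) :
    ∃ M, PMon ends univ M ∧ (∃ f ∈ M, v ∈ ends f ∧ f ≠ e₁ ∧ f ≠ e₂) ∧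
      (∃ g ∈ M, w ∈ ends g ∧ g ≠ e₂ ∧ g ≠ e₃) := by
  have huv := ne_of_ends hl h1
  have hvw := ne_of_ends hl h2
  have hwx := ne_of_ends hl h3
  obtain ⟨f, v', hf, hf1, hf2⟩ := third hc v e₁ e₂
  obtain ⟨g, w', hg, hg2, hg3⟩ := third hc w e₂ e₃
  have hvv' := ne_of_ends hl hf
  have hww' := ne_of_ends hl hg
  by_cases c1 : v' = w
  · obtain ⟨M, hM, hfM⟩ := pm_edge hl hc hb hconn f
    refine ⟨M, hM, ⟨f, hfM, by rw [hf]; simp, hf1, hf2⟩,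
      ⟨f, hfM, by rw [hf, c1]; simp, hf2, ?_⟩⟩
    rintro rfl
    rw [hf, Sym2.eq_iff] at h3
    tauto
  by_cases c2 : w' = v
  · obtain ⟨M, hM, hgM⟩ := pm_edge hl hc hb hconn g
    refine ⟨M, hM, ⟨g, hgM, by rw [hg, c2]; simp, ?_, hg2⟩,
      ⟨g, hgM, by rw [hg]; simp, hg2, hg3⟩⟩
    rintro rfl
    rw [hg, Sym2.eq_iff] at h1
    rcases h1 with ⟨h, -⟩ | ⟨h, -⟩
    · exact huw h.symm
    · exact hvw h.symm
  by_cases c3 : v' = w'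
  · exfalso
    subst c3
    have hfg : f ≠ g := by
      rintro rfl
      rw [hf, Sym2.eq_iff] at hg
      tauto
    have hcard : ({v, w, v'} : Finset V).card = 3 :=
      Finset.card_eq_three.2 ⟨v, w, v', hvw, hvv', hww', rfl⟩
    have hsub : ({f, e₂, g} : Finset E) ⊆
        univ.filter (fun e => cnt ends {v, w, v'} e = 2) := by
      intro e he
      simp only [mem_insert, mem_singleton] at he
      simp only [mem_filter, mem_univ, true_and]
      rcases he with rfl | rfl | rfl
      · simp [cnt_pair hf hvv']
      · simp [cnt_pair h2 hvw]
      · simp [cnt_pair hg hww']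
    have hin := Finset.card_le_card hsub
    rw [Finset.card_eq_three.2 ⟨f, e₂, g, hf2, hfg, hg2.symm, rfl⟩] at hin
    have hhs := handshake (reg_of_cubic hc) {v, w, v'}
    rw [sum_cnt hl, hcard] at hhs
    have hge := bd_ge hl hc hb {v, w, v'} (by rw [hcard]; decide)
    have := cut3 hl hc hb hconn h5 {v, w, v'} (by omega)
    omega
  · obtain ⟨M, hM, m1, m2⟩ := path_pm hl hc hb hconn h5 (e₁ := f) (e₂ := e₂) (e₃ := g)
      (by rw [hf, Sym2.eq_swap]) h2 hg c1 (Ne.symm c2) c3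
    exact ⟨M, hM, ⟨f, m1, by rw [hf]; simp, hf1, hf2⟩, ⟨g, m2, by rw [hg]; simp, hg2, hg3⟩⟩

set_option maxHeartbeats 1000000 in
lemma main (hl : NoLoops ends) (hc : IsCubic ends) (hb : Bridgeless ends)
    (hconn : Connected ends) (h5 : TwoFactorsAllC5 ends) {u v w x : V} {e₁ e₂ e₃ : E}
    (h1 : ends e₁ = s(u, v)) (h2 : ends e₂ = s(v, w)) (h3 : ends e₃ = s(w, x))
    (huw : u ≠ w) (hvx : v ≠ x) (hux : u ≠ x) :
    ∃ y f₄ f₅, ends f₄ = s(x, y) ∧ ends f₅ = s(y, u) ∧ y ≠ u ∧ y ≠ v ∧ y ≠ w ∧ y ≠ x := by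
  have huv := ne_of_ends hl h1
  have hvw := ne_of_ends hl h2
  have hwx := ne_of_ends hl h3
  have e12 : e₁ ≠ e₂ := by
    rintro rfl; rw [h1, Sym2.eq_iff] at h2; tauto
  have e23 : e₂ ≠ e₃ := by
    rintro rfl; rw [h2, Sym2.eq_iff] at h3; tauto
  obtain ⟨M, hM, ⟨f, hfM, hvf, hf1, hf2⟩, ⟨g, hgM, hwg, hg2, hg3⟩⟩ :=
    main_pm hl hc hb hconn h5 h1 h2 h3 huw hvx
  have hF := pm_compl hc hM
  have he1 : e₁ ∈ Mᶜ := by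
    rw [mem_compl]
    intro h
    exact hf1 ((hM.2 v (mem_univ v)).unique ⟨hfM, hvf⟩ ⟨h, by rw [h1]; simp⟩)
  have he2 : e₂ ∈ Mᶜ := by
    rw [mem_compl]
    intro h
    exact hf2 ((hM.2 v (mem_univ v)).unique ⟨hfM, hvf⟩ ⟨h, by rw [h2]; simp⟩)
  have he3 : e₃ ∈ Mᶜ := by
    rw [mem_compl]
    intro h
    exact hg3 ((hM.2 w (mem_univ w)).unique ⟨hgM, hwg⟩ ⟨h, by rw [h3]; simp⟩)
  generalize Mᶜ = F at hF he1 he2 he3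
  have second : ∀ z e, ∃ g ∈ F, ∃ z', ends g = s(z, z') ∧ g ≠ e := by
    intro z e
    have hz := hF z
    have : ((F.filter (fun e => z ∈ ends e)).erase e).Nonempty := by
      rw [← Finset.card_pos]
      have := Finset.pred_card_le_card_erase (s := F.filter (fun e => z ∈ ends e)) (a := e)
      omega
    obtain ⟨g, hg⟩ := this
    simp only [mem_erase, mem_filter] at hg
    obtain ⟨z', hz'⟩ := Sym2.mem_iff_exists.1 hg.2.2
    exact ⟨g, hg.2.1, z', hz', hg.1⟩
  obtain ⟨f5, hf5F, y, hf5, hf5e⟩ := second u e₁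
  obtain ⟨f4, hf4F, z, hf4, hf4e⟩ := second x e₃
  have hK := clo_comp hl F u
  have hKc := comp_card h5 hF u
  have huK := mem_comp (ends := ends) F u
  have hvK := clo_mem hl hK he1 h1 huK
  have hwK := clo_mem hl hK he2 h2 hvK
  have hxK := clo_mem hl hK he3 h3 hwK
  have hyK := clo_mem hl hK hf5F hf5 huK
  have hzK := clo_mem hl hK hf4F hf4 hxK
  have huy := ne_of_ends hl hf5
  have hxz := ne_of_ends hl hf4
  have iv := inc_two hF (v := v) he1 he2 e12 (by rw [h1]; simp) (by rw [h2]; simp)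
  have iw := inc_two hF (v := w) he2 he3 e23 (by rw [h2]; simp) (by rw [h3]; simp)
  have iu := inc_two hF (v := u) he1 hf5F hf5e.symm (by rw [h1]; simp) (by rw [hf5]; simp)
  have ix := inc_two hF (v := x) he3 hf4F hf4e.symm (by rw [h3]; simp) (by rw [hf4]; simp)
  have u5 : u ∈ ends f5 := by rw [hf5]; simp
  have x4 : x ∈ ends f4 := by rw [hf4]; simp
  have f5ne2 : f5 ≠ e₂ := by
    rintro rfl; rw [h2, Sym2.mem_iff] at u5; tauto
  have f5ne3 : f5 ≠ e₃ := by
    rintro rfl; rw [h3, Sym2.mem_iff] at u5; tauto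
  have f4ne2 : f4 ≠ e₂ := by
    rintro rfl; rw [h2, Sym2.mem_iff] at x4
    rcases x4 with h | h
    · exact hvx h.symm
    · exact hwx h.symm
  have f4ne1 : f4 ≠ e₁ := by
    rintro rfl; rw [h1, Sym2.mem_iff] at x4
    rcases x4 with h | h
    · exact hux h.symm
    · exact hvx h.symm
  have hyv : y ≠ v := by
    rintro rfl
    have := iv f5 hf5F (by rw [hf5]; simp)
    tauto
  have hyw : y ≠ w := by
    rintro rfl
    have := iw f5 hf5F (by rw [hf5]; simp)
    tauto
  have hzv : z ≠ v := by
    rintro rfl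
    have := iv f4 hf4F (by rw [hf4]; simp)
    tauto
  have hzw : z ≠ w := by
    rintro rfl
    have := iw f4 hf4F (by rw [hf4]; simp)
    tauto
  have hyx : y ≠ x := by
    rintro rfl
    have h54 : f5 = f4 := by
      have := ix f5 hf5F (by rw [hf5]; simp)
      tauto
    subst h54
    have hcl : Clo ends F {u, v, w, y} := by
      intro e he h
      obtain ⟨p, q, hpq, hp, hq⟩ := cnt_one hl h
      have hpe : p ∈ ends e := by rw [hpq]; simp
      simp only [mem_insert, mem_singleton] at hp
      have key : e = e₁ ∨ e = e₂ ∨ e = e₃ ∨ e = f5 := by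
        rcases hp with rfl | rfl | rfl | rfl
        · rcases iu e he hpe with h | h <;> simp [h]
        · rcases iv e he hpe with h | h <;> simp [h]
        · rcases iw e he hpe with h | h <;> simp [h]
        · rcases ix e he hpe with h | h <;> simp [h]
      have hqe : q ∈ ends e := by rw [hpq]; simp
      apply hq
      simp only [mem_insert, mem_singleton]
      rcases key with rfl | rfl | rfl | rfl
      · rw [h1, Sym2.mem_iff] at hqe; rcases hqe with h | h <;> simp [h]
      · rw [h2, Sym2.mem_iff] at hqe; rcases hqe with h | h <;> simp [h]
      · rw [h3, Sym2.mem_iff] at hqe; rcases hqe with h | h <;> simp [h]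
      · rw [hf5, Sym2.mem_iff] at hqe; rcases hqe with h | h <;> simp [h]
    have hs := Finset.card_le_card (comp_sub hl hcl (v := u) (by simp))
    have h4 : ({u, v, w, y} : Finset V).card ≤ 4 := Finset.card_le_four
    omega
  have hzu : z ≠ u := by
    rintro rfl
    rcases iu f4 hf4F (by rw [hf4]; simp) with h | h
    · exact f4ne1 h
    · rw [h, hf5, Sym2.mem_iff] at x4
      rcases x4 with h | h
      · exact hux h.symm
      · exact hyx h.symm
  have hKeq : ({u, v, w, x, y} : Finset V) = comp ends F u := by
    apply Finset.eq_of_subset_of_card_le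
    · intro t ht
      simp only [mem_insert, mem_singleton] at ht
      rcases ht with rfl | rfl | rfl | rfl | rfl <;> assumption
    · rw [hKc]
      have : ({u, v, w, x, y} : Finset V).card = 5 := by
        rw [Finset.card_insert_of_notMem, Finset.card_insert_of_notMem,
          Finset.card_insert_of_notMem, Finset.card_pair hyx.symm]
        · simp only [mem_insert, mem_singleton, not_or]
          exact ⟨hwx, hyw.symm⟩
        · simp only [mem_insert, mem_singleton, not_or]
          exact ⟨hvw, hvx, hyv.symm⟩
        · simp only [mem_insert, mem_singleton, not_or]
          exact ⟨huv, huw, hux, huy⟩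
      omega
  have hzy : z = y := by
    rw [← hKeq] at hzK
    simp only [mem_insert, mem_singleton] at hzK
    have := hxz.symm
    tauto
  subst hzy
  exact ⟨z, f4, f5, hf4, by rw [hf5, Sym2.eq_swap], hzu, hyv, hyw, hyx⟩

end Mg

end Helpers

theorem stmt11 {V E : Type} [Fintype V] [Fintype E] (ends : E → Sym2 V)
    (hl : Mg.NoLoops ends) (hc : Mg.IsCubic ends) (hb : Mg.Bridgeless ends)
    (hconn : Mg.Connected ends) (h5 : Mg.TwoFactorsAllC5 ends) :
    ∀ (u v w x : V) (e₁ e₂ e₃ : E),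
      ends e₁ = s(u, v) → ends e₂ = s(v, w) → ends e₃ = s(w, x) →
      u ≠ w → v ≠ x → u ≠ x →
      ∃ (c : ZMod 5 → V) (f : ZMod 5 → E),
        Function.Injective c ∧ Function.Injective f ∧
        (∀ i, ends (f i) = s(c i, c (i + 1))) ∧
        e₁ ∈ Set.range f ∧ e₂ ∈ Set.range f ∧ e₃ ∈ Set.range f := by
  intro u v w x e₁ e₂ e₃ h1 h2 h3 huw hvx hux
  obtain ⟨y, f₄, f₅, h4, h5', hyu, hyv, hyw, hyx⟩ :=
    Mg.main hl hc hb hconn h5 h1 h2 h3 huw hvx hux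
  have huv := Mg.ne_of_ends hl h1
  have hvw := Mg.ne_of_ends hl h2
  have hwx := Mg.ne_of_ends hl h3
  let c : ZMod 5 → V := (![u, v, w, x, y] : Fin 5 → V)
  let f : ZMod 5 → E := (![e₁, e₂, e₃, f₄, f₅] : Fin 5 → E)
  have hcinj : Function.Injective c := by
    have : Function.Injective (![u, v, w, x, y] : Fin 5 → V) := by
      intro i j hij
      fin_cases i <;> fin_cases j <;> simp at hij ⊢ <;> first | tauto | (have := hij.symm; tauto)
    exact this
  have hends : ∀ i, ends (f i) = s(c i, c (i + 1)) := by
    have : ∀ i : Fin 5, ends ((![e₁, e₂, e₃, f₄, f₅] : Fin 5 → E) i) =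
        s((![u, v, w, x, y] : Fin 5 → V) i, (![u, v, w, x, y] : Fin 5 → V) (i + 1)) := by
      intro i
      fin_cases i
      · exact h1
      · exact h2
      · exact h3
      · exact h4
      · exact h5'
    exact this
  refine ⟨c, f, hcinj, ?_, hends, ⟨(0 : Fin 5), rfl⟩, ⟨(1 : Fin 5), rfl⟩, ⟨(2 : Fin 5), rfl⟩⟩
  intro i j hij
  have := hends i
  rw [hij, hends j, Sym2.eq_iff] at this
  rcases this with ⟨h, -⟩ | ⟨ha, hb'⟩
  · exact (hcinj h).symm
  · exfalso
    have a1 := hcinj ha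
    have a2 := hcinj hb'
    rw [a1] at a2
    have : ∀ i : ZMod 5, i + 1 + 1 ≠ i := by decide
    exact this i a2
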